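/- arXiv:1005.2401 — 5 statements merged into one kernel-verified Lean document; each statement's English description precedes it below -/
import Mathlib

section
/- Let E be a uniformly convex Banach space. Then there exists a function σ : [0,∞) → [0,∞) with σ(x) > 0 for every x > 0 and lim_{x→0⁺} σ(x) = 0, such that for all vectors v, w ∈ E with v ≠ 0 satisfying ‖v + (1/2)w‖ ≥ ‖v‖, one has ‖v + w‖ ≥ ‖v‖ · (1 + σ(‖w‖/(‖v‖ + ‖w‖))). -/
open Filter Topology

/-- Lemma about uniformly convex Banach spaces (Lemma `lemma_*` in the paper):
there is a function `σ : [0,∞) → [0,∞)`, positive on `(0,∞)` and tending to `0` at `0`,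
such that whenever `‖v + (1/2)w‖ ≥ ‖v‖` (and `v ≠ 0`) one has
`‖v + w‖ ≥ ‖v‖ (1 + σ(‖w‖/(‖v‖+‖w‖)))`. -/
theorem reverse_khasminskii_uniform_convexity_lemma
    (E : Type*) [NormedAddCommGroup E] [NormedSpace ℝ E]
    [UniformConvexSpace E] [CompleteSpace E] :
    ∃ σ : ℝ → ℝ,
      (∀ x, 0 ≤ x → 0 ≤ σ x) ∧
      (∀ x, 0 < x → 0 < σ x) ∧
      Tendsto σ (𝓝[>] (0 : ℝ)) (𝓝 0) ∧
      ∀ v w : E, v ≠ 0 → ‖v‖ ≤ ‖v + (1 / 2 : ℝ) • w‖ →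
        ‖v‖ * (1 + σ (‖w‖ / (‖v‖ + ‖w‖))) ≤ ‖v + w‖ := by
  have key : ∀ x : ℝ, ∃ δ : ℝ, 0 < x → (0 < δ ∧ ∀ ⦃a : E⦄, ‖a‖ ≤ 1 → ∀ ⦃b : E⦄, ‖b‖ ≤ 1 →
      x ≤ ‖a - b‖ → ‖a + b‖ ≤ 2 - δ) := by
    intro x
    by_cases hx : 0 < x
    · obtain ⟨δ, h⟩ := exists_forall_closed_ball_dist_add_le_two_sub E hx
      exact ⟨δ, fun _ => h⟩
    · exact ⟨0, fun h => absurd h hx⟩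
  choose δ hδ using key
  have hpos : ∀ x : ℝ, 0 < x → 0 < (if 0 < x then min (δ x / 2) x else 0) := by
    intro x hx
    rw [if_pos hx]
    exact lt_min (half_pos (hδ x hx).1) hx
  refine ⟨fun x => if 0 < x then min (δ x / 2) x else 0, ?_, hpos, ?_, ?_⟩
  · intro x hx
    rcases hx.eq_or_lt with rfl | hx
    · simp
    · exact (hpos x hx).le
  · have hid : Tendsto (fun x : ℝ => x) (𝓝[>] (0 : ℝ)) (𝓝 0) :=
      tendsto_id.mono_left nhdsWithin_le_nhds
    refine tendsto_of_tendsto_of_tendsto_of_le_of_le' tendsto_const_nhds hid ?_ ?_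
    · filter_upwards [self_mem_nhdsWithin] with x hx
      exact (hpos x hx).le
    · filter_upwards [self_mem_nhdsWithin] with x hx
      have hx' : 0 < x := hx
      simp only [if_pos hx']
      exact min_le_right _ _
  · intro v w hv h
    have hv0 : 0 < ‖v‖ := norm_pos_iff.2 hv
    have h2 : 2 * ‖v‖ ≤ ‖v + (v + w)‖ := by
      have e : v + (v + w) = (2 : ℝ) • (v + (1 / 2 : ℝ) • w) := by module
      rw [e, norm_smul, Real.norm_of_nonneg (by norm_num)]
      linarith
    have hR : ‖v‖ ≤ ‖v + w‖ := by linarith [norm_add_le v (v + w)]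
    have hR0 : 0 < ‖v + w‖ := hv0.trans_le hR
    rcases eq_or_ne w 0 with rfl | hw
    · simp
    have hw0 : 0 < ‖w‖ := norm_pos_iff.2 hw
    have ht : 0 < ‖w‖ / (‖v‖ + ‖w‖) := by positivity
    have htR : ‖w‖ / (‖v‖ + ‖w‖) ≤ ‖w‖ / ‖v + w‖ :=
      div_le_div_of_nonneg_left hw0.le hR0 (norm_add_le v w)
    generalize ‖w‖ / (‖v‖ + ‖w‖) = t at ht htR
    obtain ⟨hd, H⟩ := hδ t ht
    have hn : ∀ u : E, ‖(‖v + w‖⁻¹ : ℝ) • u‖ = ‖u‖ / ‖v + w‖ := by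
      intro u
      rw [norm_smul, norm_inv, norm_norm, div_eq_inv_mul]
    have H1 := @H ((‖v + w‖⁻¹ : ℝ) • v) (by rw [hn]; exact (div_le_one hR0).2 hR)
      ((‖v + w‖⁻¹ : ℝ) • (v + w)) (by rw [hn]; exact (div_le_one hR0).2 le_rfl)
      (by rw [← smul_sub, hn]; simpa using htR)
    rw [← smul_add, hn, div_le_iff₀ hR0] at H1
    simp only [if_pos ht]
    have hm : min (δ t / 2) t ≤ δ t / 2 := min_le_left _ _
    have h3 : ‖v‖ * (1 + min (δ t / 2) t) ≤ ‖v‖ * (1 + δ t / 2) := by gcongr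
    have h4 : 2 * ‖v‖ * (1 + δ t / 2) ≤ (2 - δ t) * ‖v + w‖ * (1 + δ t / 2) :=
      mul_le_mul_of_nonneg_right (h2.trans H1) (by positivity)
    nlinarith [mul_nonneg (sq_nonneg (δ t)) hR0.le]
end

section
/- Let E be a uniformly convex Banach space and define its modulus of convexity δ(ε) := inf{ 1 − ‖(x + y)/2‖ : x, y ∈ E, ‖x‖ ≤ 1, ‖y‖ ≤ 1, ‖x − y‖ ≥ ε } for ε > 0. Then for all v, w ∈ E with w ≠ 0 and ‖v + (1/2)w‖ ≥ ‖v‖, one has ‖v + w‖ · (1 − δ(‖w‖/(‖v‖ + ‖w‖))) ≥ ‖v + (1/2)w‖. -/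
/-- The modulus of convexity of a normed space `E`:
`δ(ε) = inf { 1 - ‖(x+y)/2‖ : ‖x‖ ≤ 1, ‖y‖ ≤ 1, ‖x - y‖ ≥ ε }`. -/
noncomputable def modulusOfConvexity (E : Type*) [NormedAddCommGroup E] [NormedSpace ℝ E]
    (ε : ℝ) : ℝ :=
  sInf {d : ℝ | ∃ x y : E, ‖x‖ ≤ 1 ∧ ‖y‖ ≤ 1 ∧ ε ≤ ‖x - y‖ ∧
    d = 1 - ‖(1 / 2 : ℝ) • (x + y)‖}

/-- Key inequality in the proof of the paper's Lemma on uniformly convex Banach spaces: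
if `‖v + (1/2)w‖ ≥ ‖v‖` and `w ≠ 0`, then
`‖v + w‖ (1 - δ(‖w‖/(‖v‖+‖w‖))) ≥ ‖v + (1/2)w‖`. -/
theorem norm_add_mul_one_sub_modulus_ge
    (E : Type*) [NormedAddCommGroup E] [NormedSpace ℝ E]
    [UniformConvexSpace E] [CompleteSpace E]
    (v w : E) (hw : w ≠ 0) (h : ‖v‖ ≤ ‖v + (1 / 2 : ℝ) • w‖) :
    ‖v + (1 / 2 : ℝ) • w‖ ≤ ‖v + w‖ * (1 - modulusOfConvexity E (‖w‖ / (‖v‖ + ‖w‖))) := by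
  have e1 : v + (1 / 2 : ℝ) • w = (1 / 2 : ℝ) • (v + (v + w)) := by module
  have h1 : ‖v + (1 / 2 : ℝ) • w‖ ≤ (1 / 2) * (‖v‖ + ‖v + w‖) := by
    rw [e1, norm_smul, Real.norm_of_nonneg (by norm_num)]
    gcongr
    exact norm_add_le _ _
  have hv : ‖v‖ ≤ ‖v + w‖ := by linarith
  have hwp : 0 < ‖w‖ := norm_pos_iff.mpr hw
  have hwle : ‖w‖ ≤ ‖v + w‖ + ‖v‖ := by
    have := norm_sub_le (v + w) v
    rwa [add_sub_cancel_left] at this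
  have hr : 0 < ‖v + w‖ := by linarith
  have hadd := norm_add_le v w
  have hn : ∀ u : E, ‖(‖v + w‖⁻¹ : ℝ) • u‖ = ‖u‖ / ‖v + w‖ := by
    intro u
    rw [norm_smul, Real.norm_of_nonneg (by positivity)]
    field_simp
  have hd : modulusOfConvexity E (‖w‖ / (‖v‖ + ‖w‖)) ≤ 1 - ‖v + (1 / 2 : ℝ) • w‖ / ‖v + w‖ := by
    unfold modulusOfConvexity
    apply csInf_le
    · refine ⟨0, ?_⟩
      rintro d ⟨x, y, hx, hy, -, rfl⟩
      have := norm_add_le x y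
      rw [norm_smul, Real.norm_of_nonneg (by norm_num)]
      linarith
    · refine ⟨(‖v + w‖⁻¹ : ℝ) • (v + w), (‖v + w‖⁻¹ : ℝ) • v, ?_, ?_, ?_, ?_⟩
      · rw [hn, div_self hr.ne']
      · rw [hn]
        exact (div_le_one hr).mpr hv
      · rw [← smul_sub, add_sub_cancel_left, hn]
        gcongr
      · rw [← hn]
        congr 2
        module
  calc ‖v + (1 / 2 : ℝ) • w‖ = ‖v + w‖ * (‖v + (1 / 2 : ℝ) • w‖ / ‖v + w‖) := by field_simp
    _ ≤ _ := by
      gcongr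
      linarith
end

section
/- Let E be a uniformly convex Banach space. Then for every ε > 0 there exists a constant c > 0 such that for all v, w ∈ E satisfying ‖v + (1/2)w‖ ≥ ‖v‖ and ‖w‖ ≥ ε · (‖v‖ + ‖w‖), one has ‖v + w‖ ≥ (1 + c) · ‖v‖. -/
/-- Quantitative version of the paper's uniform convexity lemma:
in a uniformly convex Banach space, for every `ε > 0` there is `c > 0` such that
`‖v + (1/2)w‖ ≥ ‖v‖` and `‖w‖ ≥ ε (‖v‖ + ‖w‖)` imply `‖v + w‖ ≥ (1 + c) ‖v‖`. -/
theorem uniform_convexity_quantitative_gain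
    (E : Type*) [NormedAddCommGroup E] [NormedSpace ℝ E]
    [UniformConvexSpace E] [CompleteSpace E]
    (ε : ℝ) (hε : 0 < ε) :
    ∃ c : ℝ, 0 < c ∧ ∀ v w : E,
      ‖v‖ ≤ ‖v + (1 / 2 : ℝ) • w‖ → ε * (‖v‖ + ‖w‖) ≤ ‖w‖ →
      (1 + c) * ‖v‖ ≤ ‖v + w‖ := by
  obtain ⟨δ, hδ, h⟩ := exists_forall_closed_ball_dist_add_le_two_sub E (half_pos hε)
  have hc : 0 < min 1 (δ / 2) := lt_min one_pos (half_pos hδ)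
  refine ⟨min 1 (δ / 2), hc, fun v w h1 h2 => ?_⟩
  have hc1 : min 1 (δ / 2) ≤ 1 := min_le_left _ _
  have hc2 : min 1 (δ / 2) ≤ δ / 2 := min_le_right _ _
  generalize min 1 (δ / 2) = c at *
  by_contra hlt
  have hlt := lt_of_not_ge hlt
  have hv : 0 < ‖v‖ := by
    have h3 : 0 < (1 + c) * ‖v‖ := lt_of_le_of_lt (norm_nonneg _) hlt
    exact pos_of_mul_pos_right h3 (by linarith)
  obtain ⟨R, hR⟩ : ∃ R, R = (1 + c) * ‖v‖ := ⟨_, rfl⟩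
  have hR0 : 0 < R := by rw [hR]; positivity
  have key : ∀ z : E, ‖R⁻¹ • z‖ = ‖z‖ / R := fun z => by
    rw [norm_smul, Real.norm_of_nonneg (inv_nonneg.2 hR0.le)]; field_simp
  have h3 := @h (R⁻¹ • v) (by rw [key, div_le_one hR0, hR]; nlinarith) (R⁻¹ • (v + w))
    (by rw [key, div_le_one hR0, hR]; exact hlt.le)
    (by
      rw [← smul_sub, key, le_div_iff₀ hR0, sub_add_cancel_left, norm_neg]
      have h4 : ε * R ≤ ε * (2 * ‖v‖) := by
        apply mul_le_mul_of_nonneg_left _ hε.le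
        rw [hR]; nlinarith
      have h5 : 0 ≤ ε * ‖w‖ := by positivity
      nlinarith)
  rw [← smul_add, key, div_le_iff₀ hR0] at h3
  have h6 : v + (v + w) = (2 : ℝ) • (v + (1 / 2 : ℝ) • w) := by module
  rw [h6, norm_smul, Real.norm_of_nonneg (by norm_num : (0 : ℝ) ≤ 2), hR] at h3
  have h7 : 2 * ‖v‖ ≤ ((2 - δ) * (1 + c)) * ‖v‖ := by nlinarith
  have h8 := le_of_mul_le_mul_right h7 hv
  nlinarith [mul_pos hδ hc]
end

section
/- Let E be a uniformly convex Banach space, let v ∈ E with v ≠ 0, and let (w_j) be a sequence in E such that ‖v + (1/2)w_j‖ ≥ ‖v‖ for every j and ‖v + w_j‖ → ‖v‖ as j → ∞. Then ‖w_j‖ → 0 as j → ∞. -/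
open Filter Topology

/-- Convergence principle in uniformly convex Banach spaces used in the proof of the
reverse Khas'minskii condition: if `v ≠ 0`, `‖v + (1/2) w_j‖ ≥ ‖v‖` for every `j` and
`‖v + w_j‖ → ‖v‖`, then `‖w_j‖ → 0`. -/
theorem norm_tendsto_zero_of_uniformConvex
    (E : Type*) [NormedAddCommGroup E] [NormedSpace ℝ E]
    [UniformConvexSpace E] [CompleteSpace E]
    (v : E) (hv : v ≠ 0) (w : ℕ → E)
    (h1 : ∀ j, ‖v‖ ≤ ‖v + (1 / 2 : ℝ) • w j‖)
    (h2 : Tendsto (fun j => ‖v + w j‖) atTop (𝓝 ‖v‖)) :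
    Tendsto (fun j => ‖w j‖) atTop (𝓝 (0 : ℝ)) := by
  have hn : 0 < ‖v‖ := norm_pos_iff.2 hv
  rw [Metric.tendsto_atTop]
  intro ε hε
  obtain ⟨δ, hδ, h⟩ := exists_forall_closed_ball_dist_add_le_two_sub E
    (show 0 < ε / (2 * ‖v‖) by positivity)
  obtain ⟨η, hη, hη1, hηδ⟩ : ∃ η : ℝ, 0 < η ∧ η ≤ 1 ∧ η ≤ δ / 2 :=
    ⟨min 1 (δ / 2), lt_min one_pos (half_pos hδ), min_le_left _ _, min_le_right _ _⟩
  obtain ⟨r, hr⟩ : ∃ r, r = ‖v‖ * (1 + η) := ⟨_, rfl⟩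
  have hvr : ‖v‖ < r := by rw [hr]; nlinarith
  have hr2 : r ≤ 2 * ‖v‖ := by rw [hr]; nlinarith
  have hr0 : 0 < r := hn.trans hvr
  have hsm : ∀ z : E, ‖r⁻¹ • z‖ = ‖z‖ / r := fun z => by
    rw [norm_smul_of_nonneg (inv_nonneg.2 hr0.le), div_eq_inv_mul]
  obtain ⟨N, hN⟩ := eventually_atTop.1 (h2.eventually_lt_const hvr)
  refine ⟨N, fun j hj => ?_⟩
  rw [Real.dist_eq, sub_zero, abs_norm]
  by_contra! hw
  have key := @h (r⁻¹ • v) (by rw [hsm, div_le_one hr0]; exact hvr.le)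
    (r⁻¹ • (v + w j)) (by rw [hsm, div_le_one hr0]; exact (hN j hj).le)
    (by
      rw [← smul_sub, hsm, sub_add_cancel_left, norm_neg]
      exact div_le_div₀ (norm_nonneg _) hw hr0 hr2)
  have e : v + (v + w j) = (2 : ℝ) • (v + (1 / 2 : ℝ) • w j) := by module
  rw [← smul_add, hsm, e, norm_smul_of_nonneg (by norm_num), div_le_iff₀ hr0, hr] at key
  have h1j := h1 j
  have h3 : ‖v‖ * 2 ≤ ‖v‖ * ((2 - δ) * (1 + η)) := by linarith
  have h4 := le_of_mul_le_mul_left h3 hn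
  nlinarith [mul_pos hδ hη]
end

section
/- Let X be a locally compact, σ-compact Hausdorff topological space, and let (f_m) be a sequence of continuous functions f_m : X → ℝ with 0 ≤ f_{m+1} ≤ f_m ≤ 1 pointwise, converging pointwise to 0, and such that for each m there is a compact set K_m ⊆ X with f_m = 1 on X \ K_m. Then there exists a strictly increasing sequence of indices m(1) < m(2) < ⋯ such that the series F(x) = ∑_{k=1}^∞ f_{m(k)}(x) converges locally uniformly on X, the resulting function F : X → ℝ is continuous, and F(x) → +∞ along the cocompact filter on X (i.e., for every M there is a compact set C with F ≥ M outside C). -/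
open Filter Topology

/-- The extraction argument used in the paper to build a continuous proper exhaustion
function on a `p`-parabolic manifold: from a pointwise decreasing sequence of continuous
functions `0 ≤ f_{m+1} ≤ f_m ≤ 1` converging pointwise to `0`, each equal to `1` outside
a compact set, one can extract a subsequence whose series converges locally uniformly to
a continuous function tending to `+∞` along the cocompact filter. -/
theorem exists_subsequence_series_proper
    (X : Type*) [TopologicalSpace X] [LocallyCompactSpace X] [SigmaCompactSpace X]
    [T2Space X]
    (f : ℕ → X → ℝ) (hcont : ∀ m, Continuous (f m))
    (hnonneg : ∀ m x, 0 ≤ f m x)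
    (hdecr : ∀ m x, f (m + 1) x ≤ f m x)
    (hle1 : ∀ m x, f m x ≤ 1)
    (hlim : ∀ x, Tendsto (fun m => f m x) atTop (𝓝 0))
    (hout : ∀ m, ∃ K : Set X, IsCompact K ∧ ∀ x ∉ K, f m x = 1) :
    ∃ m : ℕ → ℕ, StrictMono m ∧
      TendstoLocallyUniformly (fun N x => ∑ k ∈ Finset.range N, f (m k) x)
        (fun x => ∑' k, f (m k) x) atTop ∧
      Continuous (fun x => ∑' k, f (m k) x) ∧
      Tendsto (fun x => ∑' k, f (m k) x) (cocompact X) atTop := by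
  classical
  let E := CompactExhaustion.choice X
  have hdini : ∀ n : ℕ, ∀ᶠ k in atTop, ∀ x ∈ E n, f k x < (1 / 2 : ℝ) ^ n := by
    intro n
    have h := Antitone.tendstoUniformlyOn_of_forall_tendsto (F := f) (f := fun _ => (0 : ℝ))
      (E.isCompact n) (fun i => (hcont i).continuousOn)
      (fun x _ => antitone_nat_of_succ_le (fun m => hdecr m x)) continuousOn_const
      (fun x _ => hlim x)
    rw [Metric.tendstoUniformlyOn_iff] at h
    filter_upwards [h ((1 / 2 : ℝ) ^ n) (by positivity)] with k hk x hx
    have := hk x hx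
    rw [dist_comm, Real.dist_eq, sub_zero] at this
    exact lt_of_abs_lt this
  obtain ⟨m, hm, hmE⟩ := extraction_forall_of_eventually hdini
  have hsum2 : Summable (fun n : ℕ => (1 / 2 : ℝ) ^ n) := summable_geometric_two
  have hev : ∀ K : Set X, IsCompact K →
      ∀ᶠ n in atTop, ∀ x ∈ K, ‖f (m n) x‖ ≤ (1 / 2 : ℝ) ^ n := by
    intro K hK
    obtain ⟨n, hn⟩ := E.exists_superset_of_isCompact hK
    filter_upwards [eventually_ge_atTop n] with j hj x hx
    rw [Real.norm_of_nonneg (hnonneg _ _)]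
    exact (hmE j x (E.subset hj (hn hx))).le
  have hloc : TendstoLocallyUniformly (fun N x => ∑ k ∈ Finset.range N, f (m k) x)
        (fun x => ∑' k, f (m k) x) atTop := by
    rw [tendstoLocallyUniformly_iff_forall_isCompact]
    intro K hK
    exact tendstoUniformlyOn_tsum_nat_eventually (f := fun k x => f (m k) x) hsum2 (hev K hK)
  have hsummable : ∀ x, Summable (fun k => f (m k) x) := by
    intro x
    refine Summable.of_norm_bounded_eventually_nat hsum2 ?_
    filter_upwards [hev {x} isCompact_singleton] with n hn
    exact hn x rfl
  refine ⟨m, hm, hloc, ?_, ?_⟩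
  · refine hloc.continuous (Eventually.frequently (Eventually.of_forall fun N => ?_))
    exact continuous_finsetSum _ (fun k _ => hcont (m k))
  · rw [tendsto_atTop]
    intro b
    obtain ⟨N, hN⟩ := exists_nat_ge b
    choose K hK hK1 using hout
    have hC : IsCompact (⋃ k ∈ Finset.range N, K (m k)) :=
      (Finset.range N).isCompact_biUnion (fun k _ => hK (m k))
    filter_upwards [hC.compl_mem_cocompact] with x hx
    have h1 : ∑ k ∈ Finset.range N, f (m k) x = N := by
      rw [Finset.sum_congr rfl (g := fun _ => (1 : ℝ))]
      · simp
      · intro k hk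
        exact hK1 _ x (fun h => hx (Set.mem_biUnion hk h))
    calc b ≤ N := hN
      _ = _ := h1.symm
      _ ≤ _ := (hsummable x).sum_le_tsum _ (fun k _ => hnonneg _ _)
end
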